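/- The second Apéry sequence â_n = Σ_{k=0}^n (n choose k)²((n+k) choose k)² · ( Σ_{m=1}^n 1/m³ + Σ_{m=1}^k (−1)^{m−1} / (2m³ · (n choose m) · ((n+m) choose n)) ) satisfies, for every integer n ≥ 0, the linear recurrence (n+2)³·â_{n+2} − (34n³ + 153n² + 231n + 117)·â_{n+1} + (n+1)³·â_n = 0. -/

import Mathlib

/-- The second Apéry sequence
`âₙ = Σ_{k=0}^n (n choose k)²((n+k) choose k)²·(Σ_{m=1}^n 1/m³ +
Σ_{m=1}^k (−1)^{m−1}/(2m³ (n choose m)((n+m) choose n)))`. -/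
def aperyHat (n : ℕ) : ℚ :=
  ∑ k ∈ Finset.range (n + 1), ((n.choose k : ℚ)) ^ 2 * (((n + k).choose k : ℚ)) ^ 2 *
    ((∑ m ∈ Finset.Icc 1 n, 1 / (m : ℚ) ^ 3) +
     ∑ m ∈ Finset.Icc 1 k,
       (-1 : ℚ) ^ (m - 1) / (2 * (m : ℚ) ^ 3 * (n.choose m : ℚ) * ((n + m).choose n : ℚ)))

/-!
Write `e(n,k) = (n choose k)((n+k) choose k)` and let `c(n,k)` be the bracket in the definition, so
that `âₙ = Σₖ e(n,k)² c(n,k)`, and let `L` be Apéry's recurrence operator in `n`. Zagier's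
certificate `B(n,k)` gives `L e(·,k)² = B(n,k) - B(n,k-1)`. The increments of `c` in `n` and in `k`
are explicit multiples of `1 / e`, so `L (e² c)(·,k)` differs from the increment of
`B(n,k) c(n+1,k)` in `k` only by terms linear in `e`. These terms telescope as well, and summing
over `k` leaves a boundary term that vanishes.
-/

section CommRing

variable {R : Type*} [CommRing R]

/-- The left-hand side of Apéry's recurrence, as an operator on sequences. -/
def aperyOperator (u : ℕ → R) (n : ℕ) : R :=
  ((n : R) + 2) ^ 3 * u (n + 2)
    - (34 * (n : R) ^ 3 + 153 * (n : R) ^ 2 + 231 * (n : R) + 117) * u (n + 1)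
    + ((n : R) + 1) ^ 3 * u n

theorem aperyOperator_sum {ι : Type*} (s : Finset ι) (u : ι → ℕ → R) (n : ℕ) :
    aperyOperator (fun m => ∑ i ∈ s, u i m) n = ∑ i ∈ s, aperyOperator (u i) n := by
  simp only [aperyOperator, Finset.mul_sum, Finset.sum_add_distrib, Finset.sum_sub_distrib]

theorem aperyOperator_mul_eq_mul_add (u v : ℕ → R) (a : R) (n : ℕ) :
    aperyOperator (fun m => u m * v m) n
      = a * aperyOperator u n + aperyOperator (fun m => u m * (v m - a)) n := by
  unfold aperyOperator
  ring

theorem cast_choose_succ_right (n k : ℕ) :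
    (n.choose (k + 1) : R) * (k + 1) = n.choose k * ((n : R) - k) := by
  rcases le_or_gt k n with h | h
  · rw [← Nat.cast_sub h]
    exact_mod_cast congrArg (Nat.cast : ℕ → R) (Nat.choose_succ_right_eq n k)
  · simp [Nat.choose_eq_zero_of_lt h, Nat.choose_eq_zero_of_lt (h.trans k.lt_succ_self)]

theorem cast_choose_succ_left (n k : ℕ) :
    ((n + 1).choose k : R) * ((n : R) + 1 - k) = n.choose k * (n + 1) := by
  have absorption : (n.choose k : R) * (n + 1) = (n + 1).choose (k + 1) * (k + 1) := by
    rw [mul_comm]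
    exact_mod_cast congrArg (Nat.cast : ℕ → R) (Nat.add_one_mul_choose_eq n k)
  rw [absorption, cast_choose_succ_right]
  push_cast
  ring

end CommRing

/-- The product `(n choose k)((n+k) choose k)`, whose square is the weight of the `k`-th summand
of the Apéry sequences. It vanishes for `k > n`. -/
def aperyBinom (n k : ℕ) : ℚ := (n.choose k : ℚ) * ((n + k).choose k : ℚ)

/-- The bracket that multiplies the weight `aperyBinom n k ^ 2` in `aperyHat n`. For `k > n` the
terms with `m > n` of its second sum are zero, being quotients by zero. -/
def aperyBracket (n k : ℕ) : ℚ :=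
  (∑ m ∈ Finset.Icc 1 n, 1 / (m : ℚ) ^ 3) +
    ∑ m ∈ Finset.Icc 1 k,
      (-1 : ℚ) ^ (m - 1) / (2 * (m : ℚ) ^ 3 * (n.choose m : ℚ) * ((n + m).choose n : ℚ))

theorem aperyBinom_zero_right (n : ℕ) : aperyBinom n 0 = 1 := by simp [aperyBinom]

theorem aperyBinom_eq_zero_of_lt {n k : ℕ} (h : n < k) : aperyBinom n k = 0 := by
  simp [aperyBinom, Nat.choose_eq_zero_of_lt h]

theorem aperyBinom_ne_zero {n k : ℕ} (h : k ≤ n) : aperyBinom n k ≠ 0 := by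
  have hn := Nat.choose_pos h
  have hnk := Nat.choose_pos (Nat.le_add_left k n)
  unfold aperyBinom
  positivity

theorem aperyBinom_succ_right (n k : ℕ) :
    aperyBinom n (k + 1)
      = ((n : ℚ) - k) * (n + k + 1) / ((k : ℚ) + 1) ^ 2 * aperyBinom n k := by
  have hn := cast_choose_succ_right (R := ℚ) n k
  have hnk : ((n + k + 1).choose (k + 1) : ℚ) * (k + 1) = (n + k + 1) * (n + k).choose k := by
    exact_mod_cast (Nat.add_one_mul_choose_eq (n + k) k).symm
  rw [div_mul_eq_mul_div, eq_div_iff (by positivity)]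
  unfold aperyBinom
  rw [← add_assoc]
  linear_combination ((n + k + 1).choose (k + 1) : ℚ) * (k + 1) * hn
    + n.choose k * ((n : ℚ) - k) * hnk

theorem aperyBinom_succ_left (n k : ℕ) :
    ((n : ℚ) + 1 - k) * aperyBinom (n + 1) k = (n + 1 + k) * aperyBinom n k := by
  have hn := cast_choose_succ_left (R := ℚ) n k
  have hnk := cast_choose_succ_left (R := ℚ) (n + k) k
  push_cast at hnk
  apply mul_right_cancel₀ (Nat.cast_add_one_ne_zero n : (n : ℚ) + 1 ≠ 0)
  unfold aperyBinom
  rw [Nat.add_right_comm]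
  linear_combination ((n + k + 1).choose k : ℚ) * (n + 1) * hn + n.choose k * ((n : ℚ) + 1) * hnk

theorem aperyBinom_succ_succ (n k : ℕ) :
    aperyBinom (n + 1) (k + 1)
      = ((n : ℚ) + k + 1) * (n + k + 2) / ((k : ℚ) + 1) ^ 2 * aperyBinom n k := by
  rw [aperyBinom_succ_right]
  push_cast
  linear_combination ((n : ℚ) + k + 2) / ((k : ℚ) + 1) ^ 2 * aperyBinom_succ_left n k

theorem aperyBinom_succ_right_eq_succ_left (n k : ℕ) :
    aperyBinom n (k + 1)
      = ((n : ℚ) - k) * (n + 1 - k) / ((k : ℚ) + 1) ^ 2 * aperyBinom (n + 1) k := by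
  rw [aperyBinom_succ_right]
  linear_combination -((n : ℚ) - k) / ((k : ℚ) + 1) ^ 2 * aperyBinom_succ_left n k

theorem aperyBracket_succ_right (n k : ℕ) :
    aperyBracket n (k + 1)
      = aperyBracket n k + (-1) ^ k / (2 * ((k : ℚ) + 1) ^ 3 * aperyBinom n (k + 1)) := by
  unfold aperyBracket aperyBinom
  rw [Finset.sum_Icc_succ_top (Nat.le_add_left 1 k), ← add_assoc, Nat.choose_symm_add]
  simp [mul_assoc]

theorem aperyBracket_succ_left_zero (n : ℕ) :
    aperyBracket (n + 1) 0 = aperyBracket n 0 + 1 / ((n : ℚ) + 1) ^ 3 := by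
  simp [aperyBracket, Finset.sum_Icc_succ_top (Nat.le_add_left 1 n)]

theorem aperyBracket_succ_left {n k : ℕ} (h : k ≤ n) :
    aperyBracket (n + 1) k
      = aperyBracket n k + (-1) ^ k / (((n : ℚ) + 1) ^ 2 * (n + 1 + k) * aperyBinom n k) := by
  induction k with
  | zero =>
    rw [aperyBracket_succ_left_zero, aperyBinom_zero_right]
    simp [← pow_succ]
  | succ k ih =>
    have hnk : (n : ℚ) - k ≠ 0 := sub_ne_zero.2 (by exact_mod_cast Nat.ne_of_gt h)
    have hbinom : aperyBinom n k ≠ 0 := aperyBinom_ne_zero (Nat.le_of_succ_le h)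
    rw [aperyBracket_succ_right, aperyBracket_succ_right, ih (Nat.le_of_succ_le h),
      aperyBinom_succ_succ, aperyBinom_succ_right, pow_succ]
    push_cast
    rw [show (n : ℚ) + 1 + k = n + k + 1 by ring, show (n : ℚ) + 1 + (k + 1) = n + k + 2 by ring]
    field_simp
    ring

theorem aperyBinom_sq_mul_bracket_sub_right (n k : ℕ) :
    aperyBinom n (k + 1) ^ 2 * (aperyBracket n (k + 1) - aperyBracket n k)
      = (-1) ^ k * aperyBinom n (k + 1) / (2 * ((k : ℚ) + 1) ^ 3) := by
  rcases eq_or_ne (aperyBinom n (k + 1)) 0 with h | h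
  · simp [h]
  · rw [aperyBracket_succ_right]
    field_simp
    ring

theorem aperyBinom_sq_mul_bracket_sub_left (n k : ℕ) :
    aperyBinom n k ^ 2 * (aperyBracket (n + 1) k - aperyBracket n k)
      = (-1) ^ k * aperyBinom n k / (((n : ℚ) + 1) ^ 2 * (n + 1 + k)) := by
  rcases le_or_gt k n with h | h
  · have hbinom := aperyBinom_ne_zero h
    rw [aperyBracket_succ_left h]
    field_simp
    ring
  · simp [aperyBinom_eq_zero_of_lt h]

theorem aperyBinom_sq_mul_bracket_sub_diag (n k : ℕ) :
    aperyBinom (n + 1) (k + 1) ^ 2 * (aperyBracket (n + 1) (k + 1) - aperyBracket n k)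
      = (-1) ^ k * ((n : ℚ) + k + 1) * (n + k + 2) * aperyBinom n k / (k + 1) ^ 4
        * ((n + k + 2) / (n + 1) ^ 2 + 1 / (2 * (k + 1))) := by
  have hright := aperyBinom_sq_mul_bracket_sub_right (n + 1) k
  have hleft := aperyBinom_sq_mul_bracket_sub_left n k
  rw [aperyBinom_succ_succ] at hright ⊢
  rw [show (n : ℚ) + 1 + k = n + k + 1 by ring] at hleft
  linear_combination (norm := skip) hright
    + (((n : ℚ) + k + 1) * (n + k + 2) / (k + 1) ^ 2) ^ 2 * hleft
  field_simp
  ring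

theorem aperyBinom_sq_mul_bracket_sub_antidiag (n k : ℕ) :
    aperyBinom n (k + 1) ^ 2 * (aperyBracket n (k + 1) - aperyBracket (n + 1) k)
      = (-1) ^ k * ((n : ℚ) - k) / (k + 1) ^ 4 * ((n + 1 - k) * aperyBinom (n + 1) k)
        * (1 / (2 * (k + 1)) - (n - k) / (n + 1) ^ 2) := by
  have hright := aperyBinom_sq_mul_bracket_sub_right n k
  have hleft := aperyBinom_sq_mul_bracket_sub_left n k
  rw [aperyBinom_succ_right] at hright ⊢
  rw [aperyBinom_succ_left]
  linear_combination (norm := skip) hright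
    - (((n : ℚ) - k) * (n + k + 1) / (k + 1) ^ 2) ^ 2 * hleft
  field_simp
  ring

/-- Zagier's certificate for the first Apéry sequence: its increments in `k` are the values of
`aperyOperator` on the weights `aperyBinom · k ^ 2`. -/
def zagierCert (n k : ℕ) : ℚ :=
  4 * (2 * (n : ℚ) + 3) * (k * (2 * k + 1) - (2 * (n : ℚ) + 3) ^ 2) * aperyBinom (n + 1) k ^ 2

/-- The term, linear in `aperyBinom`, that is subtracted in `zagierHatCert`. -/
def zagierHatCorrection (n k : ℕ) : ℚ :=
  5 * (2 * (n : ℚ) + 3) * (-1) ^ k * k / ((n + 1) * (n + 2)) * aperyBinom (n + 1) k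

/-- The certificate for the second Apéry sequence: its increments in `k` are the values of
`aperyOperator` on the summands `aperyBinom · k ^ 2 * aperyBracket · k`. -/
def zagierHatCert (n k : ℕ) : ℚ :=
  zagierCert n k * aperyBracket (n + 1) k - zagierHatCorrection n k

theorem aperyOperator_binom_sq_succ (n k : ℕ) :
    aperyOperator (fun m => aperyBinom m (k + 1) ^ 2) n
      = zagierCert n (k + 1) - zagierCert n k := by
  simp only [aperyOperator, zagierCert]
  rw [aperyBinom_succ_succ (n + 1), aperyBinom_succ_right_eq_succ_left n,
    aperyBinom_succ_right (n + 1)]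
  push_cast
  field_simp
  ring

theorem aperyOperator_summand_zero (n : ℕ) :
    aperyOperator (fun m => aperyBinom m 0 ^ 2 * aperyBracket m 0) n = zagierHatCert n 0 := by
  simp only [aperyOperator, zagierHatCert, zagierCert, zagierHatCorrection, aperyBinom_zero_right,
    aperyBracket_succ_left_zero]
  push_cast
  rw [show (n : ℚ) + 1 + 1 = n + 2 by ring]
  field_simp
  ring

-- Comparing all brackets with `aperyBracket (n + 1) k` instead of `aperyBracket (n + 1) (k + 1)`
-- covers the top index `k = n + 1`, where the latter contains a quotient by zero.
theorem aperyOperator_binom_sq_mul_bracket_sub (n k : ℕ) :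
    aperyOperator
        (fun m => aperyBinom m (k + 1) ^ 2 * (aperyBracket m (k + 1) - aperyBracket (n + 1) k)) n
      = zagierCert n (k + 1) * (aperyBracket (n + 1) (k + 1) - aperyBracket (n + 1) k)
        - (zagierHatCorrection n (k + 1) - zagierHatCorrection n k) := by
  simp only [aperyOperator, zagierCert, zagierHatCorrection]
  rw [aperyBinom_sq_mul_bracket_sub_diag (n + 1), aperyBinom_sq_mul_bracket_sub_antidiag,
    mul_assoc _ (aperyBinom (n + 1) (k + 1) ^ 2), aperyBinom_sq_mul_bracket_sub_right,
    aperyBinom_succ_right (n + 1), pow_succ]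
  push_cast
  rw [show (n : ℚ) + 1 + 1 = n + 2 by ring]
  field_simp
  ring

theorem aperyOperator_summand_succ (n k : ℕ) :
    aperyOperator (fun m => aperyBinom m (k + 1) ^ 2 * aperyBracket m (k + 1)) n
      = zagierHatCert n (k + 1) - zagierHatCert n k := by
  rw [aperyOperator_mul_eq_mul_add _ _ (aperyBracket (n + 1) k), aperyOperator_binom_sq_succ,
    aperyOperator_binom_sq_mul_bracket_sub]
  unfold zagierHatCert
  ring

theorem sum_aperyOperator_summand (n N : ℕ) :
    ∑ k ∈ Finset.range (N + 1), aperyOperator (fun m => aperyBinom m k ^ 2 * aperyBracket m k) n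
      = zagierHatCert n N := by
  rw [Finset.sum_range_succ', aperyOperator_summand_zero]
  simp only [aperyOperator_summand_succ, Finset.sum_range_sub, sub_add_cancel]

theorem zagierHatCert_eq_zero_of_lt {n k : ℕ} (h : n + 1 < k) : zagierHatCert n k = 0 := by
  simp [zagierHatCert, zagierCert, zagierHatCorrection, aperyBinom_eq_zero_of_lt h]

theorem aperyHat_eq_sum_range {n N : ℕ} (h : n < N) :
    aperyHat n = ∑ k ∈ Finset.range N, aperyBinom n k ^ 2 * aperyBracket n k := by
  have hsummand : aperyHat n
      = ∑ k ∈ Finset.range (n + 1), aperyBinom n k ^ 2 * aperyBracket n k := by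
    simp only [aperyHat, aperyBinom, aperyBracket, mul_pow]
  rw [hsummand]
  refine Finset.sum_subset (Finset.range_mono h) fun k _ hk => ?_
  rw [aperyBinom_eq_zero_of_lt (by simpa using hk)]
  ring

/-- The second Apéry sequence satisfies Apéry's recurrence
`(n+2)³·â_{n+2} − (34n³+153n²+231n+117)·â_{n+1} + (n+1)³·âₙ = 0`. -/
theorem aperyHat_recurrence (n : ℕ) :
    ((n : ℚ) + 2) ^ 3 * aperyHat (n + 2)
      - (34 * (n : ℚ) ^ 3 + 153 * (n : ℚ) ^ 2 + 231 * (n : ℚ) + 117) * aperyHat (n + 1)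
      + ((n : ℚ) + 1) ^ 3 * aperyHat n = 0 := by
  calc
    _ = aperyOperator
          (fun m => ∑ k ∈ Finset.range (n + 3), aperyBinom m k ^ 2 * aperyBracket m k) n := by
      rw [aperyHat_eq_sum_range (show n + 2 < n + 3 by omega),
        aperyHat_eq_sum_range (show n + 1 < n + 3 by omega),
        aperyHat_eq_sum_range (show n < n + 3 by omega), aperyOperator]
    _ = ∑ k ∈ Finset.range (n + 3),
          aperyOperator (fun m => aperyBinom m k ^ 2 * aperyBracket m k) n :=
      aperyOperator_sum _ _ n
    _ = zagierHatCert n (n + 2) := sum_aperyOperator_summand n (n + 2)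
    _ = 0 := zagierHatCert_eq_zero_of_lt (Nat.lt_succ_self (n + 1))
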